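/- Let H be a finite simple graph with v vertices, edge set E(H) and maximum degree Δ; let 𝒳 be a Polish space, φ:𝒳^v→ℝ measurable, W a symmetric kernel on [0,1]², and ν ∈ 𝒯ℳ. Then for any p ≥ 1 and q > 1 with 1/p + 1/q ≤ 1: E[ |φ(B₁,…,B_v)| Π_{(a,b)∈E(H)} |W(A_a,A_b)| ] ≤ ‖W‖_{qΔ}^{|E(H)|} · ( E_{(ν^{(2)})^{⊗v}}[ |φ(B₁,…,B_v)|^p ] )^{1/p}, where on the left (A_a,B_a), a=1,…,v, are i.i.d. with law ν, and on the right B₁,…,B_v are i.i.d. with law ν^{(2)}. -/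

import Mathlib

open MeasureTheory Filter Set
open scoped ENNReal NNReal

noncomputable section

/-- The uniform probability measure on `[0,1]`. -/
def unif01 : Measure ℝ := volume.restrict (Set.Icc 0 1)

instance : IsProbabilityMeasure unif01 :=
  ⟨by rw [unif01, Measure.restrict_apply_univ, Real.volume_Icc]; norm_num⟩

/-- The `L^r` norm (`r : ℝ≥0∞`) of a kernel, viewed as a function on `[0,1]²`. -/
def kerNorm (W : ℝ → ℝ → ℝ) (r : ℝ≥0∞) : ℝ≥0∞ :=
  eLpNorm (fun z : ℝ × ℝ => W z.1 z.2) r (unif01.prod unif01)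

/-- The (strong) cut distance `d_□` between two kernels on `[0,1]²`. -/
def cutDist (W₁ W₂ : ℝ → ℝ → ℝ) : ℝ :=
  ⨆ S : {S : Set ℝ // MeasurableSet S}, ⨆ T : {T : Set ℝ // MeasurableSet T},
    |∫ x in Set.Icc (0:ℝ) 1 ∩ S.1, ∫ y in Set.Icc (0:ℝ) 1 ∩ T.1, (W₁ x y - W₂ x y)|

/-- A Lebesgue-measure-preserving bijection of `[0,1]`. -/
def MPB (σ : ℝ → ℝ) : Prop :=
  Set.BijOn σ (Set.Icc 0 1) (Set.Icc 0 1) ∧ MeasurePreserving σ unif01 unif01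

/-- The weak cut distance `δ_□`. -/
def weakCutDist (W₁ W₂ : ℝ → ℝ → ℝ) : ℝ :=
  ⨅ σ : {σ : ℝ → ℝ // MPB σ}, cutDist (fun x y => W₁ (σ.1 x) (σ.1 y)) W₂

/-- The step kernel `W_{Q_n}` associated to an `n × n` matrix `Q`:
it equals `Q i j` when `⌈n x⌉ = i, ⌈n y⌉ = j`. -/
def stepKernel (n : ℕ) (Q : Fin n → Fin n → ℝ) : ℝ → ℝ → ℝ := fun x y =>
  ∑ i : Fin n, ∑ j : Fin n,
    if x ∈ Set.Ioc (((i : ℕ) : ℝ)/n) ((((i : ℕ) : ℝ)+1)/n) ∧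
       y ∈ Set.Ioc (((j : ℕ) : ℝ)/n) ((((j : ℕ) : ℝ)+1)/n)
    then Q i j else 0

/-- Product over the edges of `H` (each edge counted once) of `f a b`. -/
def edgeProd {v : ℕ} (G : SimpleGraph (Fin v)) [DecidableRel G.Adj]
    (f : Fin v → Fin v → ℝ) : ℝ :=
  ∏ p ∈ Finset.univ.filter (fun p : Fin v × Fin v => G.Adj p.1 p.2 ∧ p.1 < p.2), f p.1 p.2

/-- The number of edges `|E(H)|`. -/
def edgeCard {v : ℕ} (G : SimpleGraph (Fin v)) [DecidableRel G.Adj] : ℕ :=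
  (Finset.univ.filter (fun p : Fin v × Fin v => G.Adj p.1 p.2 ∧ p.1 < p.2)).card

/-- The inhomogeneous U-statistic `U_n(X)` (sum over distinct indices). -/
def Ustat {X : Type*} {v : ℕ} (G : SimpleGraph (Fin v)) [DecidableRel G.Adj]
    (φ : (Fin v → X) → ℝ) (n : ℕ) (Q : Fin n → Fin n → ℝ) (x : Fin n → X) : ℝ :=
  (∑ i ∈ Finset.univ.filter (fun i : Fin v → Fin n => Function.Injective i),
      φ (x ∘ i) * edgeProd G (fun a b => Q (i a) (i b))) / (n : ℝ) ^ v

/-- The inhomogeneous V-statistic `V_n(X)` (sum over all indices). -/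
def Vstat {X : Type*} {v : ℕ} (G : SimpleGraph (Fin v)) [DecidableRel G.Adj]
    (φ : (Fin v → X) → ℝ) (n : ℕ) (Q : Fin n → Fin n → ℝ) (x : Fin n → X) : ℝ :=
  (∑ i : Fin v → Fin n, φ (x ∘ i) * edgeProd G (fun a b => Q (i a) (i b))) / (n : ℝ) ^ v

open Classical in
/-- Kullback-Leibler divergence `D(ν | ρ) ∈ [0,∞]`. -/
def KLdiv {α : Type*} [MeasurableSpace α] (ν ρ : Measure α) : ℝ≥0∞ :=
  if ν ≪ ρ ∧ Integrable (llr ν ρ) ν then ENNReal.ofReal (∫ a, llr ν ρ a ∂ν) else ⊤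

open Classical in
/-- `ν` itself if it is a probability measure, junk value `0` otherwise. -/
def probOr {α : Type*} [MeasurableSpace α] (ν : Measure α) : Measure α :=
  if IsProbabilityMeasure ν then ν else 0

instance {α : Type*} [MeasurableSpace α] (ν : Measure α) : SigmaFinite (probOr ν) := by
  unfold probOr
  split_ifs with h
  · haveI := h; infer_instance
  · infer_instance

/-- `v`-fold product of a (probability) measure. -/
def piProb {α : Type*} [MeasurableSpace α] (v : ℕ) (ν : Measure α) : Measure (Fin v → α) :=
  Measure.pi fun _ => probOr ν

/-- The functional `T_{W,φ}(ν) = E[φ(B₁,…,B_v) ∏_{(a,b) ∈ E(H)} W(A_a,A_b)]`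
for `(A_a,B_a)` i.i.d. with law `ν`. -/
def TWphi {X : Type*} [MeasurableSpace X] {v : ℕ} (G : SimpleGraph (Fin v))
    [DecidableRel G.Adj] (W : ℝ → ℝ → ℝ) (φ : (Fin v → X) → ℝ)
    (ν : Measure (ℝ × X)) : ℝ :=
  ∫ z : Fin v → ℝ × X,
    φ (fun a => (z a).2) * edgeProd G (fun a b => W (z a).1 (z b).1) ∂(piProb v ν)

/-- Membership in `𝒯ℳ`: probability measures on `[0,1] × 𝒳` whose first marginal
is uniform on `[0,1]`. -/
def inTM {X : Type*} [MeasurableSpace X] (ν : Measure (ℝ × X)) : Prop :=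
  IsProbabilityMeasure ν ∧ ν.map Prod.fst = unif01

/-- The rate function `I₀(t) = inf { D(ν|ρ) : ν ∈ 𝒯ℳ, D(ν|ρ) < ∞, T_{W,φ}(ν) = t }`. -/
def rate0 {X : Type*} [MeasurableSpace X] {v : ℕ} (G : SimpleGraph (Fin v))
    [DecidableRel G.Adj] (W : ℝ → ℝ → ℝ) (φ : (Fin v → X) → ℝ) (μ : Measure X)
    (t : ℝ) : ℝ≥0∞ :=
  ⨅ ν : {ν : Measure (ℝ × X) //
      inTM ν ∧ KLdiv ν (unif01.prod μ) ≠ ⊤ ∧ TWphi G W φ ν = t},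
    KLdiv ν.1 (unif01.prod μ)

/-- Tail assumption (T): `E_μ[e^{λ ψ(X)^p}] < ∞` for all `λ > 0`; for `p = ∞`
it means `ψ` is bounded. -/
def TailCond {X : Type*} [MeasurableSpace X] (μ : Measure X) (ψ : X → ℝ)
    (p : ℝ≥0∞) : Prop :=
  if p = ⊤ then ∃ C : ℝ, ∀ x, ψ x ≤ C
  else ∀ lam : ℝ, 0 < lam →
    ∫⁻ x, ENNReal.ofReal (Real.exp (lam * ψ x ^ p.toReal)) ∂μ < ⊤

/-- A sequence of random elements `T n` defined on probability spaces `(Ω n, P n)`,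
taking values in a topological space `E`, satisfies a large deviation principle at
speed `n` with good rate function `I`. -/
def SatisfiesLDP {E : Type*} [TopologicalSpace E] {Ω : ℕ → Type*}
    [∀ n, MeasurableSpace (Ω n)] (P : ∀ n, Measure (Ω n)) (T : ∀ n, Ω n → E)
    (I : E → ℝ≥0∞) : Prop :=
  (∀ c : ℝ≥0∞, c ≠ ⊤ → IsCompact {x | I x ≤ c}) ∧
  ∀ F : Set E, MeasurableSet[borel E] F →
    (-(⨅ x ∈ interior F, (I x : EReal)) ≤
      Filter.atTop.liminf fun n : ℕ =>
        (((n : ℝ)⁻¹ : ℝ) : EReal) * ENNReal.log (P n {ω | T n ω ∈ F})) ∧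
    (Filter.atTop.limsup (fun n : ℕ =>
        (((n : ℝ)⁻¹ : ℝ) : EReal) * ENNReal.log (P n {ω | T n ω ∈ F})) ≤
      -(⨅ x ∈ closure F, (I x : EReal)))

end
/-- One-variable Hölder with total weight at most one on a probability space. -/
theorem holder_le_one {α κ : Type*} [MeasurableSpace α] (μ : Measure α) [IsProbabilityMeasure μ]
    (E : Finset κ) (f : κ → α → ℝ≥0∞) (hm : ∀ e ∈ E, Measurable (f e)) (w : κ → ℝ)
    (hw : ∀ e ∈ E, 0 ≤ w e) (hsum : ∑ e ∈ E, w e ≤ 1) :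
    ∫⁻ x, ∏ e ∈ E, f e x ^ w e ∂μ ≤ ∏ e ∈ E, (∫⁻ x, f e x ∂μ) ^ w e := by
  have := ENNReal.lintegral_mul_prod_norm_pow_le (μ := μ) E (g := fun _ => 1) (f := f)
    aemeasurable_const (fun e he => (hm e he).aemeasurable) (1 - ∑ e ∈ E, w e) (p := w)
    (by ring) (by linarith) hw
  simpa using this

open Classical in
/-- One-variable step: factors not depending on the variable are pulled out. -/
theorem holder_dep {α κ : Type*} [MeasurableSpace α] (μ : Measure α) [IsProbabilityMeasure μ]
    (E : Finset κ) (D : κ → Prop) (f : κ → α → ℝ≥0∞) (hm : ∀ e ∈ E, Measurable (f e)) (w : κ → ℝ)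
    (hw : ∀ e ∈ E, 0 ≤ w e) (hD : ∀ e ∈ E, ¬ D e → ∀ x y, f e x = f e y)
    (hsum : ∑ e ∈ E.filter D, w e ≤ 1) :
    ∫⁻ x, ∏ e ∈ E, f e x ^ w e ∂μ ≤ ∏ e ∈ E, (∫⁻ x, f e x ∂μ) ^ w e := by
  have hne : Nonempty α := nonempty_of_isProbabilityMeasure μ
  obtain ⟨x₀⟩ := hne
  have h1 : ∀ x, ∏ e ∈ E, f e x ^ w e =
      (∏ e ∈ E.filter D, f e x ^ w e) * ∏ e ∈ E.filter (fun e => ¬ D e), f e x₀ ^ w e := by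
    intro x
    rw [← Finset.prod_filter_mul_prod_filter_not E D]
    congr 1
    refine Finset.prod_congr rfl fun e he => ?_
    rw [Finset.mem_filter] at he
    rw [hD e he.1 he.2 x x₀]
  have h2 : ∏ e ∈ E, (∫⁻ x, f e x ∂μ) ^ w e =
      (∏ e ∈ E.filter D, (∫⁻ x, f e x ∂μ) ^ w e) *
        ∏ e ∈ E.filter (fun e => ¬ D e), f e x₀ ^ w e := by
    rw [← Finset.prod_filter_mul_prod_filter_not E D]
    congr 1
    refine Finset.prod_congr rfl fun e he => ?_
    rw [Finset.mem_filter] at he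
    have : f e = fun _ => f e x₀ := funext fun x => hD e he.1 he.2 x x₀
    rw [this]
    simp
  simp_rw [h1]
  rw [h2, lintegral_mul_const _ (Finset.measurable_prod _ fun e he =>
    (hm e (Finset.mem_filter.1 he).1).pow_const _)]
  gcongr
  exact holder_le_one μ _ f (fun e he => hm e (Finset.mem_filter.1 he).1) w
    (fun e he => hw e (Finset.mem_filter.1 he).1) hsum

open Classical in
/-- Finner's inequality, marginal form. -/
theorem finner_marginal {ι α κ : Type*} [MeasurableSpace α] (μ : Measure α)
    [IsProbabilityMeasure μ] (E : Finset κ) (D : κ → ι → Prop) (f : κ → (ι → α) → ℝ≥0∞)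
    (hm : ∀ e ∈ E, Measurable (f e)) (w : κ → ℝ) (hw : ∀ e ∈ E, 0 ≤ w e)
    (hD : ∀ e ∈ E, ∀ i, ¬ D e i → ∀ x y, f e (Function.update x i y) = f e x)
    (hsum : ∀ i, ∑ e ∈ E.filter (fun e => D e i), w e ≤ 1) (s : Finset ι) (x : ι → α) :
    lmarginal (fun _ => μ) s (fun z => ∏ e ∈ E, f e z ^ w e) x ≤
      ∏ e ∈ E, (lmarginal (fun _ => μ) s (f e) x) ^ w e := by
  induction s using Finset.induction generalizing x with
  | empty => simp
  | insert i s hi ih =>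
    rw [lmarginal_insert _ (Finset.measurable_prod _ fun e he => (hm e he).pow_const _) hi]
    refine (lintegral_mono fun y => ih _).trans ?_
    refine (holder_dep μ E (fun e => D e i)
      (fun e y => lmarginal (fun _ => μ) s (f e) (Function.update x i y))
      (fun e he => ((hm e he).lmarginal (fun _ => μ)).comp (measurable_update x)) w hw ?_
      (hsum i)).trans (le_of_eq ?_)
    · intro e he hde y y'
      rw [lmarginal_update_of_notMem (hm e he) hi, lmarginal_update_of_notMem (hm e he) hi]
      congr 1
      have : ∀ y, f e ∘ (fun z => Function.update z i y) = f e := fun y =>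
        funext fun z => hD e he i hde z y
      rw [this, this]
    · refine Finset.prod_congr rfl fun e he => ?_
      rw [lmarginal_insert _ (hm e he) hi]

open Classical in
/-- Finner's inequality. -/
theorem finner {ι α κ : Type*} [Fintype ι] [MeasurableSpace α] (μ : Measure α)
    [IsProbabilityMeasure μ] (E : Finset κ) (D : κ → ι → Prop) (f : κ → (ι → α) → ℝ≥0∞)
    (hm : ∀ e ∈ E, Measurable (f e)) (w : κ → ℝ) (hw : ∀ e ∈ E, 0 ≤ w e)
    (hD : ∀ e ∈ E, ∀ i, ¬ D e i → ∀ x y, f e (Function.update x i y) = f e x)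
    (hsum : ∀ i, ∑ e ∈ E.filter (fun e => D e i), w e ≤ 1) :
    ∫⁻ z, ∏ e ∈ E, f e z ^ w e ∂(Measure.pi fun _ : ι => μ) ≤
      ∏ e ∈ E, (∫⁻ z, f e z ∂(Measure.pi fun _ : ι => μ)) ^ w e := by
  obtain ⟨x₀⟩ : Nonempty α := nonempty_of_isProbabilityMeasure μ
  have := finner_marginal μ E D f hm w hw hD hsum Finset.univ (fun _ => x₀)
  simpa using this

theorem probOr_eq {α : Type*} [MeasurableSpace α] (ν : Measure α) [h : IsProbabilityMeasure ν] :
    probOr ν = ν := by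
  unfold probOr
  rw [if_pos h]

/-- The edges at a vertex number at most the maximal degree. -/
theorem card_edges_at_le {v : ℕ} (G : SimpleGraph (Fin v)) [DecidableRel G.Adj] (i : Fin v) :
    ((Finset.univ.filter (fun p : Fin v × Fin v => G.Adj p.1 p.2 ∧ p.1 < p.2)).filter
      (fun p => p.1 = i ∨ p.2 = i)).card ≤ G.maxDegree := by
  refine le_trans ?_ (G.degree_le_maxDegree i)
  rw [← G.card_neighborFinset_eq_degree]
  refine Finset.card_le_card_of_injOn (fun p => if p.1 = i then p.2 else p.1) ?_ ?_
  · rintro ⟨a, b⟩ h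
    simp only [Finset.coe_filter, Finset.mem_filter, Finset.mem_univ, true_and,
      Set.mem_ofPred_eq] at h
    obtain ⟨⟨h1, -⟩, h2⟩ := h
    simp only [Finset.mem_coe, SimpleGraph.mem_neighborFinset]
    split_ifs with h3
    · exact h3 ▸ h1
    · rcases h2 with h2 | h2
      · exact absurd h2 h3
      · exact h2 ▸ h1.symm
  · rintro ⟨a, b⟩ h ⟨c, d⟩ h' heq
    simp only [Finset.coe_filter, Finset.mem_filter, Finset.mem_univ, true_and,
      Set.mem_ofPred_eq] at h h' heq
    obtain ⟨⟨-, h1⟩, h2⟩ := h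
    obtain ⟨⟨-, h3⟩, h4⟩ := h'
    rw [Prod.mk.injEq]
    split_ifs at heq <;> grind

/-- Two distinct coordinates of a product measure are distributed as the product. -/
theorem map_two_coords {X : Type*} [MeasurableSpace X] {v : ℕ} (ν : Measure (ℝ × X))
    [IsProbabilityMeasure ν] (hν : ν.map Prod.fst = unif01) {a b : Fin v} (hab : a ≠ b) :
    (Measure.pi fun _ : Fin v => ν).map (fun z => ((z a).1, (z b).1)) = unif01.prod unif01 := by
  have hind := (ProbabilityTheory.iIndepFun_pi (μ := fun _ : Fin v => ν)
    (X := fun _ => Prod.fst) (fun _ => measurable_fst.aemeasurable)).indepFun hab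
  have hm : ∀ c : Fin v, Measurable (fun z : Fin v → ℝ × X => (z c).1) := fun c =>
    measurable_fst.comp (measurable_pi_apply c)
  have hc : ∀ c : Fin v,
      (Measure.pi fun _ : Fin v => ν).map (fun z => (z c).1) = unif01 := by
    intro c
    have h1 : (fun z : Fin v → ℝ × X => (z c).1) = Prod.fst ∘ (Function.eval c) := rfl
    rw [h1, ← Measure.map_map measurable_fst (measurable_pi_apply c),
      (measurePreserving_eval (fun _ : Fin v => ν) c).map_eq, hν]
  have := (ProbabilityTheory.indepFun_iff_map_prod_eq_prod_map_map (hm a).aemeasurable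
    (hm b).aemeasurable).1 hind
  rw [this, hc, hc]

/-- Lemma 2.2: Hölder bound for `T_{|W|,|φ|}(ν)`. -/
theorem TWphi_holder_bound
    {X : Type*} [MeasurableSpace X] [TopologicalSpace X] [PolishSpace X] [BorelSpace X]
    {v : ℕ} (hv : 2 ≤ v) (G : SimpleGraph (Fin v)) [DecidableRel G.Adj]
    (φ : (Fin v → X) → ℝ) (hφ : Measurable φ)
    (W : ℝ → ℝ → ℝ) (hWmeas : Measurable (Function.uncurry W))
    (hWsymm : ∀ x y, W x y = W y x)
    (ν : Measure (ℝ × X)) (hν : inTM ν)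
    (p q : ℝ) (hp : 1 ≤ p) (hq : 1 < q) (hpq : 1 / p + 1 / q ≤ 1) :
    ∫⁻ z : Fin v → ℝ × X,
        ENNReal.ofReal
          (|φ (fun a => (z a).2)| * edgeProd G (fun a b => |W (z a).1 (z b).1|))
        ∂(piProb v ν) ≤
      kerNorm W (ENNReal.ofReal q * (G.maxDegree : ℝ≥0∞)) ^ edgeCard G *
        (∫⁻ y : Fin v → X, ENNReal.ofReal (|φ y| ^ p)
            ∂(piProb v (ν.map Prod.snd))) ^ (1 / p) := by
  classical
  obtain ⟨hprob, hfst⟩ := hν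
  have hprob2 : IsProbabilityMeasure (ν.map Prod.snd) :=
    Measure.isProbabilityMeasure_map measurable_snd.aemeasurable
  have hp0 : 0 < p := by linarith
  have hq0 : 0 < q := by linarith
  unfold piProb
  rw [probOr_eq, probOr_eq]
  set S := Finset.univ.filter (fun p : Fin v × Fin v => G.Adj p.1 p.2 ∧ p.1 < p.2) with hS
  set Δ := G.maxDegree with hΔ
  have hΔpos : ∀ e ∈ S, 0 < Δ := by
    intro e he
    have := card_edges_at_le G e.1
    refine lt_of_lt_of_le (Finset.card_pos.2 ⟨e, ?_⟩) this
    rw [Finset.mem_filter]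
    exact ⟨he, Or.inl rfl⟩
  have hWm : ∀ a b : Fin v, Measurable (fun z : Fin v → ℝ × X => W (z a).1 (z b).1) := by
    intro a b
    exact hWmeas.comp ((measurable_fst.comp (measurable_pi_apply a)).prodMk
      (measurable_fst.comp (measurable_pi_apply b)))
  have hφm : Measurable (fun z : Fin v → ℝ × X => φ (fun a => (z a).2)) := by
    refine hφ.comp (measurable_pi_iff.2 fun a => measurable_snd.comp (measurable_pi_apply a))
  let f : Option (Fin v × Fin v) → (Fin v → ℝ × X) → ℝ≥0∞ := fun o z =>
    o.elim (ENNReal.ofReal (|φ (fun a => (z a).2)| ^ p))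
      (fun e => ‖W (z e.1).1 (z e.2).1‖ₑ ^ (q * Δ))
  let w : Option (Fin v × Fin v) → ℝ := fun o => o.elim (1 / p) (fun _ => 1 / (q * Δ))
  let D : Option (Fin v × Fin v) → Fin v → Prop := fun o i =>
    o.elim True (fun e => e.1 = i ∨ e.2 = i)
  have key := finner ν (Finset.insertNone S) D f ?_ w ?_ ?_ ?_
  · rw [Finset.prod_insertNone] at key
    have hL : ∀ z : Fin v → ℝ × X, ENNReal.ofReal
          (|φ (fun a => (z a).2)| * edgeProd G (fun a b => |W (z a).1 (z b).1|)) =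
        ∏ e ∈ Finset.insertNone S, f e z ^ w e := by
      intro z
      rw [Finset.prod_insertNone, ENNReal.ofReal_mul (abs_nonneg _)]
      congr 1
      · simp only [f, w, Option.elim]
        rw [ENNReal.ofReal_rpow_of_nonneg (by positivity) (by positivity), ← Real.rpow_mul
          (abs_nonneg _), mul_one_div_cancel hp0.ne', Real.rpow_one]
      · unfold edgeProd
        rw [ENNReal.ofReal_prod_of_nonneg (fun _ _ => abs_nonneg _)]
        refine Finset.prod_congr rfl fun e he => ?_
        have h0 : (0:ℝ) < Δ := by exact_mod_cast hΔpos e he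
        simp only [f, w, Option.elim]
        rw [← ENNReal.rpow_mul, mul_one_div_cancel (by positivity), ENNReal.rpow_one,
          Real.enorm_eq_ofReal_abs]
    simp_rw [hL]
    refine key.trans (le_of_eq ?_)
    rw [mul_comm]
    congr 1
    · unfold edgeCard
      rw [← Finset.prod_const]
      refine Finset.prod_congr rfl fun e he => ?_
      have h0 : (0:ℝ) < Δ := by exact_mod_cast hΔpos e he
      have hne : e.1 ≠ e.2 := (Finset.mem_filter.1 he).2.2.ne
      have hr : ENNReal.ofReal q * (Δ : ℝ≥0∞) = ENNReal.ofReal (q * Δ) := by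
        rw [ENNReal.ofReal_mul hq0.le, ENNReal.ofReal_natCast]
      have hr0 : 0 < q * (Δ:ℝ) := by positivity
      rw [hr]
      unfold kerNorm
      rw [eLpNorm_eq_lintegral_rpow_enorm_toReal (by simpa using hr0) ENNReal.ofReal_ne_top,
        ENNReal.toReal_ofReal hr0.le, ← map_two_coords ν hfst hne, lintegral_map]
      · rfl
      · exact (hWmeas.enorm).pow_const _
      · exact (measurable_fst.comp (measurable_pi_apply _)).prodMk
          (measurable_fst.comp (measurable_pi_apply _))
    · have hmp : MeasurePreserving (fun (z : Fin v → ℝ × X) a => (z a).2)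
          (Measure.pi fun _ => ν) (Measure.pi fun _ => ν.map Prod.snd) :=
        measurePreserving_pi _ _ (f := fun _ => Prod.snd) (fun _ => ⟨measurable_snd, rfl⟩)
      have := hmp.lintegral_comp (f := fun y => ENNReal.ofReal (|φ y| ^ p))
        ((hφ.abs.pow_const p).ennreal_ofReal)
      rw [← this]
      rfl
  · rintro (_ | e) -
    · exact (hφm.abs.pow_const p).ennreal_ofReal
    · exact (hWm _ _).enorm.pow_const _
  · rintro (_ | e) -
    · simp only [w, Option.elim]; positivity
    · simp only [w, Option.elim]; positivity
  · rintro (_ | e) - i hi x y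
    · exact absurd trivial hi
    · simp only [D, Option.elim, not_or] at hi
      simp only [f, Option.elim]
      simp [Function.update_of_ne, hi.1, hi.2]
  · intro i
    rw [Finset.sum_filter, Finset.sum_insertNone]
    rw [if_pos (show D none i from trivial)]
    have hs : (∑ e ∈ S, if D (some e) i then w (some e) else 0) =
        ∑ e ∈ S.filter (fun e => e.1 = i ∨ e.2 = i), 1 / (q * (Δ : ℝ)) := by
      refine Eq.trans ?_ (Finset.sum_filter (fun e : Fin v × Fin v => e.1 = i ∨ e.2 = i) _).symm
      refine Finset.sum_congr rfl fun e _ => ?_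
      by_cases h : e.1 = i ∨ e.2 = i
      · rw [if_pos h, if_pos (show D (some e) i from h)]
        rfl
      · rw [if_neg h, if_neg (show ¬ D (some e) i from h)]
    rw [hs, Finset.sum_const, nsmul_eq_mul]
    refine le_trans (add_le_add_right ?_ _) hpq
    have hc : (((S.filter (fun e => e.1 = i ∨ e.2 = i)).card : ℕ) : ℝ) ≤ Δ := by
      exact_mod_cast card_edges_at_le G i
    rcases Nat.eq_zero_or_pos Δ with h0 | h0
    · rw [h0]; simp; positivity
    · have h0' : (0:ℝ) < Δ := by exact_mod_cast h0
      rw [mul_one_div, div_le_div_iff₀ (by positivity) hq0]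
      nlinarith
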